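/- arXiv:1511.09405 — 10 statements merged into one kernel-verified Lean document; each statement's English description precedes it below -/
import Mathlib

section
/- Let k ≥ 1 be an integer and let p : G' → G be a directed emulator map between digraphs. If G has no simple directed cycle of length ≤ k, then G' has no simple directed cycle of length ≤ k. -/
/-!
A simple cycle of length `l` in `G'` projects under `p` to a closed walk of length `l` in `G`,
whose edges may repeat. Any closed walk contains a simple directed cycle that is no longer
(`exists_simpleDirCycle_of_closedWalk`), so `G` has a simple cycle of length at most `l ≤ k`.
-/

/-- A directed emulator map `p : G' → G` between digraphs (given by adjacency
relations `E'` on `V'` and `E` on `V`): `p` is surjective, maps edges to edges,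
and has the edge-lifting property. -/
def IsDirEmulatorMap {V' V : Type*} (E' : V' → V' → Prop) (E : V → V → Prop)
    (p : V' → V) : Prop :=
  Function.Surjective p ∧
  (∀ x y, E' x y → E (p x) (p y)) ∧
  (∀ u v, E u v → ∀ x, p x = u → ∃ y, p y = v ∧ E' x y)

/-- A simple directed cycle of length `l` in the digraph with adjacency relation `E`:
a closed directed walk `x 0 → x 1 → ⋯ → x l = x 0` whose edges
`(x i, x (i+1))`, `i < l`, are pairwise distinct. -/
def HasSimpleDirCycle {V : Type*} (E : V → V → Prop) (l : ℕ) : Prop :=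
  ∃ x : ℕ → V, x l = x 0 ∧ (∀ i < l, E (x i) (x (i + 1))) ∧
    ∀ i < l, ∀ j < l, (x i, x (i + 1)) = (x j, x (j + 1)) → i = j

/-- Every nonempty closed walk contains a simple directed cycle that is no longer: if the edges
at steps `i < j` coincide, the segment from step `i` to step `j` is a shorter closed walk. -/
theorem exists_simpleDirCycle_of_closedWalk {V : Type*} (E : V → V → Prop) (l : ℕ) :
    ∀ x : ℕ → V, 1 ≤ l → x l = x 0 → (∀ i < l, E (x i) (x (i + 1))) →
      ∃ m, 1 ≤ m ∧ m ≤ l ∧ HasSimpleDirCycle E m := by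
  induction l using Nat.strong_induction_on with
  | _ l ih =>
    intro x hl hc hE
    -- A revisited vertex already closes up a shorter walk.
    have key : ∀ i j, i < j → j < l → x i = x j →
        ∃ m, 1 ≤ m ∧ m ≤ l ∧ HasSimpleDirCycle E m := by
      intro i j hij hj h
      obtain ⟨m, h1, h2, h3⟩ := ih (j - i) (by omega) (fun n => x (i + n)) (by omega)
        (by simp only [Nat.add_sub_cancel' hij.le, Nat.add_zero, h])
        (fun n hn => hE (i + n) (by omega))
      exact ⟨m, h1, by omega, h3⟩
    by_cases hs : ∀ i < l, ∀ j < l, (x i, x (i + 1)) = (x j, x (j + 1)) → i = j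
    · exact ⟨l, hl, le_rfl, x, hc, hE, hs⟩
    · push Not at hs
      obtain ⟨i, hi, j, hj, he, hne⟩ := hs
      have h : x i = x j := congrArg Prod.fst he
      rcases lt_or_gt_of_ne hne with hij | hij
      · exact key i j hij hj h
      · exact key j i hij hi h.symm

/-- If `G` has no simple directed cycle of length `≤ k`, then neither has any
directed emulator `G'` of `G`. -/
theorem stmt0 {V' V : Type*} (E' : V' → V' → Prop) (E : V → V → Prop)
    (p : V' → V) (hp : IsDirEmulatorMap E' E p) (k : ℕ) (hk : 1 ≤ k)
    (hG : ∀ l, 1 ≤ l → l ≤ k → ¬ HasSimpleDirCycle E l) :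
    ∀ l, 1 ≤ l → l ≤ k → ¬ HasSimpleDirCycle E' l := by
  rintro l hl hlk ⟨x, hc, hE, -⟩
  obtain ⟨m, h1, h2, h3⟩ := exists_simpleDirCycle_of_closedWalk E l (fun n => p (x n)) hl
    (congrArg p hc) (fun i hi => hp.2.1 _ _ (hE i hi))
  exact hG m h1 (h2.trans hlk) h3
end

section
/- Let p : G' → G be a directed emulator map between digraphs with G' finite, and let c : v_0 → v_1 → ⋯ → v_k = v_0 be a directed cycle in G of length k ≥ 1 whose vertices v_0, …, v_{k-1} are pairwise distinct. Then there exist an integer m ≥ 1, an index r with 0 ≤ r < k, and a closed directed walk x_0 → x_1 → ⋯ → x_{mk} = x_0 in G' with pairwise distinct edges such that p(x_t) = v_{(r+t) mod k} for all 0 ≤ t ≤ mk. In particular, G' contains a simple directed cycle of length a positive multiple of k all of whose vertices map under p into {v_0, …, v_{k-1}}. -/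
/-- Lifting a directed cycle of length `k` with pairwise distinct vertices along a
directed emulator map with finite source: there is a closed directed walk of length
`m * k` (`m ≥ 1`) in `G'` with pairwise distinct edges projecting onto the cycle
(up to a cyclic shift by `r`). -/
theorem stmt1 {V' V : Type*} [Finite V'] (E' : V' → V' → Prop) (E : V → V → Prop)
    (p : V' → V) (hp : IsDirEmulatorMap E' E p) (k : ℕ) (hk : 1 ≤ k)
    (v : ℕ → V) (hclosed : v k = v 0)
    (hedges : ∀ i < k, E (v i) (v (i + 1)))
    (hdistinct : ∀ i < k, ∀ j < k, v i = v j → i = j) :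
    ∃ (m r : ℕ) (x : ℕ → V'), 1 ≤ m ∧ r < k ∧ x (m * k) = x 0 ∧
      (∀ t < m * k, E' (x t) (x (t + 1))) ∧
      (∀ s < m * k, ∀ t < m * k, (x s, x (s + 1)) = (x t, x (t + 1)) → s = t) ∧
      (∀ t ≤ m * k, p (x t) = v ((r + t) % k)) := by
  have hstep : ∀ (t : ℕ) (x : V'),
      ∃ y, p x = v (t % k) → p y = v ((t + 1) % k) ∧ E' x y := by
    intro t x
    by_cases hx : p x = v (t % k)
    · have hlt : t % k < k := Nat.mod_lt _ hk
      -- at `t % k + 1 = k` the index wraps around, which is where `v k = v 0` is needed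
      have hv : v (t % k + 1) = v ((t + 1) % k) := by
        rcases Nat.lt_or_ge (t % k + 1) k with h | h
        · rw [← Nat.mod_add_mod, Nat.mod_eq_of_lt h]
        · have h' : t % k + 1 = k := by omega
          rw [← Nat.mod_add_mod, h', Nat.mod_self, hclosed]
      obtain ⟨y, hy, hxy⟩ := hp.2.2 _ _ (hedges _ hlt) x hx
      exact ⟨y, fun _ => ⟨hy.trans hv, hxy⟩⟩
    · exact ⟨x, fun h => absurd h hx⟩
  choose f hf using hstep
  obtain ⟨x₀, hx₀⟩ := hp.1 (v 0)
  let y : ℕ → V' := fun n => Nat.rec x₀ (fun t x => f t x) n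
  have hy : ∀ t, p (y t) = v (t % k) := by
    intro t
    induction t with
    | zero => rw [Nat.zero_mod]; exact hx₀
    | succ t ih => exact (hf t _ ih).1
  have hyE : ∀ t, E' (y t) (y (t + 1)) := fun t => (hf t _ (hy t)).2
  have hrep : ∃ b, ∃ a < b, y a = y b := by
    obtain ⟨a, b, hab, h⟩ := Finite.exists_ne_map_eq_of_infinite y
    rcases Nat.lt_or_gt_of_ne hab with h' | h'
    · exact ⟨b, a, h', h⟩
    · exact ⟨a, b, h', h.symm⟩
  -- `b` is the time of the first return of the walk to an already visited vertex
  obtain ⟨b, ⟨a, hab, heq⟩, hmin⟩ :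
      ∃ b, (∃ a < b, y a = y b) ∧ ∀ c < b, ¬ ∃ a < c, y a = y c := by
    classical
    exact ⟨Nat.find hrep, Nat.find_spec hrep, fun _ hc => Nat.find_min hrep hc⟩
  have hmod : a ≡ b [MOD k] :=
    hdistinct _ (Nat.mod_lt _ hk) _ (Nat.mod_lt _ hk) (by rw [← hy, ← hy, heq])
  obtain ⟨m, hm⟩ := (Nat.modEq_iff_dvd' hab.le).1 hmod
  have hmk : m * k = b - a := by rw [hm, Nat.mul_comm]
  refine ⟨m, a % k, fun t => y (a + t), ?_, Nat.mod_lt _ hk, ?_, ?_, ?_, ?_⟩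
  · rcases Nat.eq_zero_or_pos m with h | h
    · rw [h, Nat.zero_mul] at hmk
      omega
    · exact h
  · change y (a + m * k) = y a
    rw [hmk, Nat.add_sub_cancel' hab.le, heq]
  · exact fun t _ => hyE (a + t)
  · intro s hs t ht h
    have h1 : y (a + s) = y (a + t) := congrArg Prod.fst h
    rcases Nat.lt_trichotomy s t with hst | hst | hst
    · exact absurd ⟨a + s, by omega, h1⟩ (hmin (a + t) (by omega))
    · exact hst
    · exact absurd ⟨a + t, by omega, h1.symm⟩ (hmin (a + s) (by omega))
  · intro t _
    rw [Nat.mod_add_mod]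
    exact hy (a + t)
end

section
/- Let M and N be complete DFAs over a finite alphabet Σ, and suppose M is accessible (every state of M is reachable from its start state under the extended transition function). Suppose f : Q_N → Q_M satisfies f(start_N) = start_M and f(δ_N(q,a)) = δ_M(f(q),a) for every state q of N and every letter a ∈ Σ. Then f is surjective, and f is a directed emulator map from the underlying digraph of N onto the underlying digraph of M. -/
/-- The underlying digraph of a DFA: an edge `(q, r)` whenever `δ(q, a) = r`
for some letter `a`. -/
def dfaDigraph {α σ : Type*} (M : DFA α σ) : σ → σ → Prop :=
  fun q r => ∃ a, M.step q a = r

/-- If `M` is accessible and `f` commutes with starts and transitions, then `f` is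
surjective and is a directed emulator map between the underlying digraphs. -/
theorem stmt2 {α σM σN : Type*} [Fintype α] [Finite σM] [Finite σN]
    (M : DFA α σM) (N : DFA α σN)
    (hMacc : ∀ q : σM, ∃ w : List α, M.evalFrom M.start w = q)
    (f : σN → σM)
    (hstart : f N.start = M.start)
    (hstep : ∀ q a, f (N.step q a) = M.step (f q) a) :
    Function.Surjective f ∧ IsDirEmulatorMap (dfaDigraph N) (dfaDigraph M) f := by
  have hev : ∀ (w : List α) (q : σN), f (N.evalFrom q w) = M.evalFrom (f q) w := by
    intro w
    induction w with
    | nil => intro q; rfl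
    | cons a w ih =>
      intro q
      rw [DFA.evalFrom_cons, DFA.evalFrom_cons, ih, hstep]
  have hsurj : Function.Surjective f := by
    intro q
    obtain ⟨w, hw⟩ := hMacc q
    exact ⟨N.evalFrom N.start w, by rw [hev, hstart, hw]⟩
  refine ⟨hsurj, hsurj, ?_, ?_⟩
  · rintro x _ ⟨a, rfl⟩
    exact ⟨a, (hstep x a).symm⟩
  · rintro _ _ ⟨a, rfl⟩ x rfl
    exact ⟨N.step x a, hstep x a, a, rfl⟩
end

section
/- Let M be an accessible complete DFA over a finite alphabet Σ whose distinct states are pairwise distinguishable, and let A be an accessible complete DFA over Σ accepting the same language as M. Then there exists exactly one map f : Q_A → Q_M such that f(start_A) = start_M and f(δ_A(q,a)) = δ_M(f(q),a) for every state q of A and letter a ∈ Σ; moreover this f satisfies F_A = f^{-1}(F_M), i.e., a state of A is accepting if and only if its image under f is accepting. -/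
/-!
Sending the state of `A` reached by a word `w` to the state of `M` reached by `w` is the only
candidate for a morphism, since every state of `A` is reached by some word. It is well defined: if
`u` and `v` lead to the same state of `A`, then `u ++ w` and `v ++ w` are accepted together for
every `w`, by `A` and hence by `M`, so the states of `M` reached by `u` and `v` are
indistinguishable and therefore equal (`evalFrom_eq_of_evalFrom_eq`). Acceptance is preserved
because a state reached by `w` is accepting exactly when `w` belongs to the common language.
-/

theorem evalFrom_start_mem_accept_iff {α σM σA : Type*} {M : DFA α σM} {A : DFA α σA}
    (hlang : A.accepts = M.accepts) (w : List α) :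
    A.evalFrom A.start w ∈ A.accept ↔ M.evalFrom M.start w ∈ M.accept := by
  change w ∈ A.accepts ↔ w ∈ M.accepts
  rw [hlang]

/-- Words leading to the same state of `A` lead to the same state of `M`: this makes the
morphism from `A` to `M` well defined. -/
theorem evalFrom_eq_of_evalFrom_eq {α σM σA : Type*} {M : DFA α σM} {A : DFA α σA}
    (hMdist : ∀ q q' : σM, q ≠ q' → ∃ w : List α,
      Xor' (M.evalFrom q w ∈ M.accept) (M.evalFrom q' w ∈ M.accept))
    (hlang : A.accepts = M.accepts) {u v : List α}
    (huv : A.evalFrom A.start u = A.evalFrom A.start v) :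
    M.evalFrom M.start u = M.evalFrom M.start v := by
  by_contra hne
  obtain ⟨w, hw⟩ := hMdist _ _ hne
  rw [← M.evalFrom_of_append, ← M.evalFrom_of_append,
    ← evalFrom_start_mem_accept_iff hlang, ← evalFrom_start_mem_accept_iff hlang,
    A.evalFrom_of_append, A.evalFrom_of_append, huv] at hw
  exact (xor_self _).mp hw

theorem map_evalFrom_start {α σM σA : Type*} {M : DFA α σM} {A : DFA α σA} {f : σA → σM}
    (hf : f A.start = M.start ∧ ∀ q a, f (A.step q a) = M.step (f q) a) (w : List α) :
    f (A.evalFrom A.start w) = M.evalFrom M.start w := by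
  induction w using List.reverseRecOn with
  | nil => exact hf.1
  | append_singleton w a ih =>
    rw [A.evalFrom_append_singleton, M.evalFrom_append_singleton, hf.2, ih]

/-- If `M` is accessible with pairwise distinguishable states and `A` is an
accessible DFA accepting the same language, then there is exactly one map
`f : Q_A → Q_M` commuting with starts and transitions, and it satisfies
`F_A = f ⁻¹ (F_M)`. -/
theorem stmt3 {α σM σA : Type*} [Fintype α] [Finite σM] [Finite σA]
    (M : DFA α σM) (A : DFA α σA)
    (hMacc : ∀ q : σM, ∃ w : List α, M.evalFrom M.start w = q)
    (hMdist : ∀ q q' : σM, q ≠ q' → ∃ w : List α,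
      Xor' (M.evalFrom q w ∈ M.accept) (M.evalFrom q' w ∈ M.accept))
    (hAacc : ∀ q : σA, ∃ w : List α, A.evalFrom A.start w = q)
    (hlang : A.accepts = M.accepts) :
    (∃! f : σA → σM, f A.start = M.start ∧
        ∀ q a, f (A.step q a) = M.step (f q) a) ∧
    (∀ f : σA → σM,
      (f A.start = M.start ∧ ∀ q a, f (A.step q a) = M.step (f q) a) →
      A.accept = f ⁻¹' M.accept) := by
  refine ⟨?_, fun f hf => ?_⟩
  · choose word hword using hAacc
    refine ⟨fun q => M.evalFrom M.start (word q), ⟨?_, fun q a => ?_⟩, fun g hg => ?_⟩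
    · exact evalFrom_eq_of_evalFrom_eq hMdist hlang (v := []) (hword _)
    · change M.evalFrom M.start (word (A.step q a)) = M.step (M.evalFrom M.start (word q)) a
      rw [← M.evalFrom_append_singleton]
      apply evalFrom_eq_of_evalFrom_eq hMdist hlang
      rw [A.evalFrom_append_singleton, hword, hword]
    · funext q
      rw [← map_evalFrom_start hg, hword]
  · ext q
    obtain ⟨w, rfl⟩ := hAacc q
    rw [Set.mem_preimage, map_evalFrom_start hf, evalFrom_start_mem_accept_iff hlang]
end

section
/- Let k ≥ 1. Let M be an accessible complete DFA over a finite alphabet Σ whose distinct states are pairwise distinguishable, and let A be an accessible complete DFA over Σ accepting the same language as M. If the underlying digraph of M has no simple directed cycle of length ≤ k, then the underlying digraph of A has no simple directed cycle of length ≤ k. -/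
/-- A closed walk of positive length forces a simple cycle of at most that length: if two of its
vertices coincide, the segment between them is a shorter closed walk. -/
theorem exists_simple_of_closed_walk {V : Type*} (E : V → V → Prop) (l : ℕ) (hl : 1 ≤ l)
    (x : ℕ → V) (hx : x l = x 0) (hE : ∀ i < l, E (x i) (x (i + 1))) :
    ∃ l', 1 ≤ l' ∧ l' ≤ l ∧ HasSimpleDirCycle E l' := by
  induction l using Nat.strong_induction_on generalizing x with
  | _ l ih =>
    by_cases h : ∃ i j, i < j ∧ j < l ∧ x i = x j
    · obtain ⟨i, j, hij, hjl, hxij⟩ := h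
      obtain ⟨l', h1, h2, h3⟩ := ih (j - i) (by omega) (by omega) (fun n => x (i + n))
        (by simp only [Nat.add_sub_cancel' hij.le, Nat.add_zero, hxij])
        (fun n hn => hE (i + n) (by omega))
      exact ⟨l', h1, by omega, h3⟩
    · push Not at h
      refine ⟨l, hl, le_rfl, x, hx, hE, fun i hi j hj hij => ?_⟩
      have hv : x i = x j := congrArg Prod.fst hij
      rcases lt_trichotomy i j with hlt | heq | hgt
      · exact absurd hv (h i j hlt hj)
      · exact heq
      · exact absurd hv.symm (h j i hgt hi)

/-- An accessible DFA maps, compatibly with transitions, to any DFA for the same language whose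
states are pairwise distinguishable: `q` goes to the state reached by a word that reaches `q`. -/
theorem exists_dfa_hom {α σM σA : Type*} (M : DFA α σM) (A : DFA α σA)
    (hMdist : ∀ q q' : σM, q ≠ q' → ∃ w : List α,
      Xor' (M.evalFrom q w ∈ M.accept) (M.evalFrom q' w ∈ M.accept))
    (hAacc : ∀ q : σA, ∃ w : List α, A.evalFrom A.start w = q)
    (hlang : A.accepts = M.accepts) :
    ∃ f : σA → σM, ∀ q a, f (A.step q a) = M.step (f q) a := by
  choose w hw using hAacc
  have key : ∀ q v, M.evalFrom (M.evalFrom M.start (w q)) v ∈ M.accept ↔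
      A.evalFrom q v ∈ A.accept := by
    intro q v
    have h : w q ++ v ∈ A.accepts ↔ w q ++ v ∈ M.accepts := by rw [hlang]
    rw [DFA.mem_accepts, DFA.mem_accepts, DFA.eval, DFA.eval, DFA.evalFrom_of_append,
      DFA.evalFrom_of_append, hw] at h
    exact h.symm
  refine ⟨fun q => M.evalFrom M.start (w q), fun q a => ?_⟩
  by_contra hne
  obtain ⟨v, hv⟩ := hMdist _ _ hne
  have h1 := key (A.step q a) v
  have h2 := key q (a :: v)
  rw [DFA.evalFrom_cons, DFA.evalFrom_cons] at h2
  exact (xor_iff_not_iff _ _).mp hv (h1.trans h2.symm)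

/-- If the minimal DFA `M` (accessible, pairwise distinguishable states) of a language
has no simple directed cycle of length `≤ k`, then neither does any accessible DFA `A`
accepting the same language. -/
theorem stmt4 {α σM σA : Type*} [Fintype α] [Finite σM] [Finite σA]
    (k : ℕ) (hk : 1 ≤ k)
    (M : DFA α σM) (A : DFA α σA)
    (hMacc : ∀ q : σM, ∃ w : List α, M.evalFrom M.start w = q)
    (hMdist : ∀ q q' : σM, q ≠ q' → ∃ w : List α,
      Xor' (M.evalFrom q w ∈ M.accept) (M.evalFrom q' w ∈ M.accept))
    (hAacc : ∀ q : σA, ∃ w : List α, A.evalFrom A.start w = q)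
    (hlang : A.accepts = M.accepts)
    (hM : ∀ l, 1 ≤ l → l ≤ k → ¬ HasSimpleDirCycle (dfaDigraph M) l) :
    ∀ l, 1 ≤ l → l ≤ k → ¬ HasSimpleDirCycle (dfaDigraph A) l := by
  obtain ⟨f, hf⟩ := exists_dfa_hom M A hMdist hAacc hlang
  rintro l hl hlk ⟨x, hx, hE, -⟩
  obtain ⟨l', h1, h2, h3⟩ := exists_simple_of_closed_walk (dfaDigraph M) l hl (fun i => f (x i))
    (congrArg f hx) (fun i hi => by
      obtain ⟨a, ha⟩ := hE i hi
      exact ⟨a, by rw [← ha, hf]⟩)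
  exact hM l' h1 (h2.trans hlk) h3
end

section
/- Let p_1 : G_1 → G and p_2 : G_2 → G be directed emulator maps between digraphs. Define the digraph G_{12} with vertex set {(v_1,v_2) ∈ V(G_1) × V(G_2) : p_1(v_1) = p_2(v_2)} and an edge from (v_1,v_2) to (w_1,w_2) exactly when (v_1,w_1) ∈ E(G_1) and (v_2,w_2) ∈ E(G_2). Then the coordinate projections G_{12} → G_1 and G_{12} → G_2 are directed emulator maps, and the composite map p_1 ∘ pr_1 = p_2 ∘ pr_2 : G_{12} → G is a directed emulator map. -/
/-- Fibered product of two directed emulators `p₁ : G₁ → G` and `p₂ : G₂ → G`: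
the coordinate projections of `G₁₂` are directed emulator maps, and so is the
composite map `G₁₂ → G`. -/
theorem stmt6 {V1 V2 V : Type*} (E1 : V1 → V1 → Prop) (E2 : V2 → V2 → Prop)
    (E : V → V → Prop) (p1 : V1 → V) (p2 : V2 → V)
    (h1 : IsDirEmulatorMap E1 E p1) (h2 : IsDirEmulatorMap E2 E p2) :
    IsDirEmulatorMap
      (fun (x y : {x : V1 × V2 // p1 x.1 = p2 x.2}) => E1 x.1.1 y.1.1 ∧ E2 x.1.2 y.1.2)
      E1 (fun x => x.1.1) ∧
    IsDirEmulatorMap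
      (fun (x y : {x : V1 × V2 // p1 x.1 = p2 x.2}) => E1 x.1.1 y.1.1 ∧ E2 x.1.2 y.1.2)
      E2 (fun x => x.1.2) ∧
    (∀ x : {x : V1 × V2 // p1 x.1 = p2 x.2}, p1 x.1.1 = p2 x.1.2) ∧
    IsDirEmulatorMap
      (fun (x y : {x : V1 × V2 // p1 x.1 = p2 x.2}) => E1 x.1.1 y.1.1 ∧ E2 x.1.2 y.1.2)
      E (fun x => p1 x.1.1) := by
  obtain ⟨s1, m1, l1⟩ := h1
  obtain ⟨s2, m2, l2⟩ := h2
  refine ⟨⟨?_, fun _ _ h => h.1, ?_⟩, ⟨?_, fun _ _ h => h.2, ?_⟩, fun x => x.2,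
    ⟨?_, fun _ _ h => m1 _ _ h.1, ?_⟩⟩
  · intro a
    obtain ⟨b, hb⟩ := s2 (p1 a)
    exact ⟨⟨(a, b), hb.symm⟩, rfl⟩
  -- An edge of `G₁` is pushed down to `G` and lifted to `G₂` at the second coordinate.
  · rintro _ w hw ⟨⟨a, b⟩, hab⟩ rfl
    obtain ⟨y, hy, hby⟩ := l2 _ _ (m1 _ _ hw) b hab.symm
    exact ⟨⟨(w, y), hy.symm⟩, rfl, hw, hby⟩
  · intro b
    obtain ⟨a, ha⟩ := s1 (p2 b)
    exact ⟨⟨(a, b), ha⟩, rfl⟩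
  · rintro _ w hw ⟨⟨a, b⟩, hab⟩ rfl
    obtain ⟨y, hy, hay⟩ := l1 _ _ (m2 _ _ hw) a hab
    exact ⟨⟨(y, w), hy⟩, rfl, hay, hw⟩
  · intro v
    obtain ⟨a, ha⟩ := s1 v
    obtain ⟨b, hb⟩ := s2 v
    exact ⟨⟨(a, b), ha.trans hb.symm⟩, ha⟩
  -- An edge of `G` is lifted to both factors; the endpoints lie over the same vertex.
  · rintro u v huv ⟨⟨a, b⟩, hab⟩ hu
    obtain ⟨y, hy, hay⟩ := l1 _ _ huv a hu
    obtain ⟨z, hz, hbz⟩ := l2 _ _ huv b (hab.symm.trans hu)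
    exact ⟨⟨(y, z), hy.trans hz.symm⟩, hy, hay, hbz⟩
end

section
/- Let M be a complete DFA over a finite alphabet Σ, and let G be the loopless simple digraph on the states of M with an edge (q,r) exactly when q ≠ r and δ_M(q,a) = r for some letter a. Let π : G' → G be a directed emulator map, where G' is a loopless digraph. Then there exists a complete DFA A over Σ whose state set is V(G') such that: (i) π(start_A) = start_M; (ii) π(δ_A(x,a)) = δ_M(π(x),a) for every x ∈ V(G') and a ∈ Σ; (iii) the accepting set of A is π^{-1}(F_M); (iv) for every x ∈ V(G') and a ∈ Σ with δ_A(x,a) ≠ x, the pair (x, δ_A(x,a)) is an edge of G'; and consequently (v) A accepts exactly the language of M and the underlying loopless simple digraph of A is a subgraph of G'. -/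
/-- A directed emulator `G'` of the underlying loopless simple digraph of a complete
DFA `M` lifts to a complete DFA `A` on the vertices of `G'` accepting the same
language as `M`, whose underlying loopless simple digraph is a subgraph of `G'`. -/
theorem stmt9 {α σ V' : Type*} [Fintype α] [Finite σ] [Finite V']
    (M : DFA α σ) (E' : V' → V' → Prop) (hloopless : ∀ x, ¬ E' x x)
    (π : V' → σ)
    (hπ : IsDirEmulatorMap E'
      (fun q r => q ≠ r ∧ ∃ a, M.step q a = r) π) :
    ∃ A : DFA α V',
      π A.start = M.start ∧
      (∀ x a, π (A.step x a) = M.step (π x) a) ∧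
      A.accept = π ⁻¹' M.accept ∧
      (∀ x a, A.step x a ≠ x → E' x (A.step x a)) ∧
      A.accepts = M.accepts ∧
      (∀ x y : V', x ≠ y → (∃ a, A.step x a = y) → E' x y) := by
  obtain ⟨hsurj, -, hlift⟩ := hπ
  obtain ⟨s, hs⟩ := hsurj M.start
  -- When `M` moves, the lifting property supplies an edge of `G'`; when `M` stays put, so does `A`.
  have hstep : ∀ x a, ∃ y, π y = M.step (π x) a ∧ (y ≠ x → E' x y) := by
    intro x a
    by_cases h : π x = M.step (π x) a
    · exact ⟨x, h, fun hx => absurd rfl hx⟩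
    · obtain ⟨y, hy, hE⟩ := hlift _ _ ⟨h, a, rfl⟩ x rfl
      exact ⟨y, hy, fun _ => hE⟩
  choose step hproj hedge using hstep
  have heval : ∀ (w : List α) (x : V'), π (w.foldl step x) = w.foldl M.step (π x) := by
    intro w
    induction w with
    | nil => intro x; rfl
    | cons a w ih => intro x; rw [List.foldl_cons, List.foldl_cons, ih, hproj]
  refine ⟨⟨step, s, π ⁻¹' M.accept⟩, hs, hproj, rfl, hedge, ?_, ?_⟩
  · ext w
    change π (w.foldl step s) ∈ M.accept ↔ w.foldl M.step M.start ∈ M.accept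
    rw [heval, hs]
  · rintro x y hxy ⟨a, rfl⟩
    exact hedge x a hxy.symm
end

section
/- Let k ≥ 1 and n = 2k+1. Consider the complete DFA Z with state set ZMod n, alphabet {1, …, k} (each letter regarded as an element of ZMod n), transition function δ(i,j) = i + j, start state 0, and accepting set {0}. Then: (a) Z accepts exactly the words a_1 a_2 ⋯ a_m over {1,…,k} with a_1 + a_2 + ⋯ + a_m ≡ 0 (mod n); (b) every state of Z is reachable from 0; (c) any two distinct states of Z are distinguishable, i.e., for i ≠ i' there is a word w such that exactly one of δ*(i,w), δ*(i',w) equals 0. -/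
/-!
Every letter acts on `ZMod (2k+1)` as a translation, so a word acts as translation by its letter
sum (`ZDFA_evalFrom`). This describes the accepted words. Since `1` is a letter and generates
`ZMod (2k+1)`, any state can be reached from any other (`ZDFA_exists_evalFrom_eq`); a word taking
`i` to `0` cannot take `i' ≠ i` to `0`, as translations are injective.
-/

/-- The minimal DFA of the language `Z_{2k+1}^{1,…,k}`: states `ZMod (2k+1)`,
alphabet `{1,…,k}` (letters regarded as elements of `ZMod (2k+1)`), transitions
`δ(i,j) = i + j`, start state `0`, accepting set `{0}`. -/
def ZDFA (k : ℕ) : DFA {j : ℕ // 1 ≤ j ∧ j ≤ k} (ZMod (2 * k + 1)) where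
  step := fun i j => i + ((j : ℕ) : ZMod (2 * k + 1))
  start := 0
  accept := {0}

/-- Reading `w` from state `i` translates `i` by the letter sum of `w`. -/
theorem ZDFA_evalFrom (k : ℕ) (i : ZMod (2 * k + 1)) (w : List {j : ℕ // 1 ≤ j ∧ j ≤ k}) :
    (ZDFA k).evalFrom i w = i + (w.map (fun j => (j.val : ZMod (2 * k + 1)))).sum := by
  induction w generalizing i with
  | nil => simp
  | cons a w ih =>
    rw [DFA.evalFrom_cons, ih, List.map_cons, List.sum_cons, ← add_assoc]
    rfl

/-- The word `1^m`, with `m` the representative of `q - i` in `[0, 2k]`, leads from `i` to `q`. -/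
theorem ZDFA_exists_evalFrom_eq (k : ℕ) (hk : 1 ≤ k) (i q : ZMod (2 * k + 1)) :
    ∃ w : List {j : ℕ // 1 ≤ j ∧ j ≤ k}, (ZDFA k).evalFrom i w = q := by
  refine ⟨List.replicate (q - i).val ⟨1, le_refl 1, hk⟩, ?_⟩
  simp [ZDFA_evalFrom]

/-- (a) `ZDFA k` accepts exactly the words whose letter sum is `0` in `ZMod (2k+1)`;
(b) every state is reachable from `0`; (c) distinct states are distinguishable. -/
theorem stmt10 (k : ℕ) (hk : 1 ≤ k) :
    ((ZDFA k).accepts = {w : List {j : ℕ // 1 ≤ j ∧ j ≤ k} |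
      (w.map (fun j => ((j : ℕ) : ZMod (2 * k + 1)))).sum = 0}) ∧
    (∀ q : ZMod (2 * k + 1), ∃ w : List {j : ℕ // 1 ≤ j ∧ j ≤ k},
      (ZDFA k).evalFrom (ZDFA k).start w = q) ∧
    (∀ i i' : ZMod (2 * k + 1), i ≠ i' → ∃ w : List {j : ℕ // 1 ≤ j ∧ j ≤ k},
      Xor' ((ZDFA k).evalFrom i w = 0) ((ZDFA k).evalFrom i' w = 0)) := by
  refine ⟨?_, fun q => ZDFA_exists_evalFrom_eq k hk _ q, fun i i' hne => ?_⟩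
  · ext w
    change (ZDFA k).evalFrom 0 w = 0 ↔ _
    rw [ZDFA_evalFrom, zero_add]
    -- In the statement `w` is first coerced to `List ℕ` by a monadic lift, so that the letter sum
    -- runs over `w >>= fun a => pure a.val`; this list is `w.map Subtype.val`.
    change _ ↔ (List.map _ (w >>= fun a => pure a.val)).sum = 0
    simp
  · -- A word leading from `i` to `0` separates `i` from `i'`, since translations are injective.
    obtain ⟨w, hw⟩ := ZDFA_exists_evalFrom_eq k hk i 0
    refine ⟨w, Or.inl ⟨hw, fun hw' => hne ?_⟩⟩
    rw [ZDFA_evalFrom] at hw hw'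
    exact add_right_cancel (hw.trans hw'.symm)
end

section
/- Let k ≥ 5. Consider the complete DFA A_k over the alphabet {0,1} with state set ZMod 6 × ZMod k and transitions δ((i,j),0) = (i+1, j) and δ((i,j),1) = (2i, j+1). Then the underlying undirected multigraph of A_k has no simple cycle of length ≤ 4: there is no closed walk of length l with 1 ≤ l ≤ 4 in this multigraph traversing l pairwise distinct edges. -/
/-!
The second coordinate changes by at most one along each edge, so a walk of length at most `4`
in the multigraph of `A_k` lifts to a walk in the infinite multigraph on `ZMod 6 × ℤ` given by the
same formulas, started at height `0`, with all heights in `[-4, 4]`. If the walk downstairs is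
closed, its final height is divisible by `k ≥ 5`, hence is `0`, so the lift is closed as well;
and edges that are distinct downstairs have distinct lifts. It therefore suffices that the lifted
multigraph has no simple cycle of length at most `4` through a vertex of height `0`
(`noReturn_of_le_four`). That is a finite check over the six possible starting points, expressed
by the decidable predicate `NoReturn`; `NoReturn.false_of_walk` is the lifting argument.
-/

/-- A simple cycle of length `l` in the underlying undirected multigraph of a DFA
with transition function `δ : Q → α → Q` (one edge `e = (q, a)` joining `q` and
`δ(q, a)` for each pair `(q, a)`): a closed walk in which each edge is traversed in
either direction and the `l` edges are pairwise distinct. -/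
def MultigraphSimpleCycle {Q α : Type*} (δ : Q → α → Q) (l : ℕ) : Prop :=
  ∃ (x : ℕ → Q) (e : ℕ → Q × α),
    x l = x 0 ∧
    (∀ t < l, ((e t).1 = x t ∧ δ (e t).1 (e t).2 = x (t + 1)) ∨
              ((e t).1 = x (t + 1) ∧ δ (e t).1 (e t).2 = x t)) ∧
    (∀ s < l, ∀ t < l, e s = e t → s = t)

/-- The transition function of the DFA `A_k`: states `ZMod 6 × ZMod k`, alphabet
`{0, 1}`, transitions `δ((i,j),0) = (i+1, j)` and `δ((i,j),1) = (2i, j+1)`. -/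
def A13step (k : ℕ) : ZMod 6 × ZMod k → Fin 2 → ZMod 6 × ZMod k :=
  fun q a => if a = 0 then (q.1 + 1, q.2) else (2 * q.1, q.2 + 1)

/-- The transition function of `A_k` with the cyclic coordinate unrolled to `ℤ`. -/
def liftStep (q : ZMod 6 × ℤ) (a : Fin 2) : ZMod 6 × ℤ :=
  if a = 0 then (q.1 + 1, q.2) else (2 * q.1, q.2 + 1)

/-- No walk of exactly `n` further steps from `q` in the lifted multigraph, using pairwise distinct
edges none of which lies in `vis`, ends at `(i₀, 0)`. The two conjuncts of the recursive clause
treat edges traversed forwards and backwards; the source of an `a`-edge ending at `q` has height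
`q.2 - a`. -/
def NoReturn (i₀ : ZMod 6) : ℕ → ZMod 6 × ℤ → List ((ZMod 6 × ℤ) × Fin 2) → Prop
  | 0, q, _ => q ≠ (i₀, 0)
  | n + 1, q, vis =>
    (∀ a : Fin 2, (q, a) ∉ vis → NoReturn i₀ n (liftStep q a) ((q, a) :: vis)) ∧
    (∀ a : Fin 2, ∀ i : ZMod 6, liftStep (i, q.2 - (a.val : ℤ)) a = q →
      ((i, q.2 - (a.val : ℤ)), a) ∉ vis →
        NoReturn i₀ n (i, q.2 - (a.val : ℤ)) (((i, q.2 - (a.val : ℤ)), a) :: vis))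

instance NoReturn.decidable (i₀ : ZMod 6) : ∀ (n : ℕ) (q : ZMod 6 × ℤ)
    (vis : List ((ZMod 6 × ℤ) × Fin 2)), Decidable (NoReturn i₀ n q vis)
  | 0, q, _ => inferInstanceAs (Decidable (q ≠ (i₀, 0)))
  | n + 1, q, vis =>
    haveI := NoReturn.decidable i₀ n
    inferInstanceAs (Decidable
      ((∀ a : Fin 2, (q, a) ∉ vis → NoReturn i₀ n (liftStep q a) ((q, a) :: vis)) ∧
      (∀ a : Fin 2, ∀ i : ZMod 6, liftStep (i, q.2 - (a.val : ℤ)) a = q →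
        ((i, q.2 - (a.val : ℤ)), a) ∉ vis →
          NoReturn i₀ n (i, q.2 - (a.val : ℤ)) (((i, q.2 - (a.val : ℤ)), a) :: vis))))

theorem noReturn_of_le_four : ∀ n : Fin 4, ∀ i₀ : ZMod 6,
    NoReturn i₀ (n.val + 1) (i₀, 0) [] := by
  decide +kernel

/-- The covering map from the lifted vertices to the states of `A_k` sending height `0` to `j`. -/
def proj (k : ℕ) (j : ZMod k) (q : ZMod 6 × ℤ) : ZMod 6 × ZMod k := (q.1, j + (q.2 : ZMod k))

theorem proj_liftStep (k : ℕ) (j : ZMod k) (q : ZMod 6 × ℤ) (a : Fin 2) :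
    A13step k (proj k j q) a = proj k j (liftStep q a) := by
  unfold A13step proj liftStep
  split_ifs <;> simp [add_assoc]

theorem abs_liftStep_le (q : ZMod 6 × ℤ) (a : Fin 2) : |(liftStep q a).2| ≤ |q.2| + 1 := by
  unfold liftStep
  split_ifs
  · simp
  · simpa using abs_add_le q.2 1

/-- Edges of `A_k` ending at the image of `q` lift to edges ending at `q`. -/
theorem exists_lift_of_step_eq (k : ℕ) (j : ZMod k) (q : ZMod 6 × ℤ) (p : ZMod 6 × ZMod k)
    (a : Fin 2) (h : A13step k p a = proj k j q) :
    liftStep (p.1, q.2 - (a.val : ℤ)) a = q ∧ p = proj k j (p.1, q.2 - (a.val : ℤ)) := by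
  obtain ⟨i, m⟩ := p
  obtain ⟨i', d⟩ := q
  fin_cases a
  · simp_all [A13step, proj, liftStep]
  · simp only [A13step, proj, liftStep, Prod.mk.injEq] at h ⊢
    simp at h ⊢
    exact ⟨h.1, by linear_combination h.2⟩

/-- A simple cycle `x, e` downstairs refutes `NoReturn` at every stage `t` of the lifted walk,
where `q` lifts `x t` and `vis` consists of lifts of the edges used before time `t`. -/
theorem NoReturn.false_of_walk {k : ℕ} (hk : 5 ≤ k) {l : ℕ} (hl : l ≤ 4)
    {x : ℕ → ZMod 6 × ZMod k} {e : ℕ → (ZMod 6 × ZMod k) × Fin 2}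
    (hx : x l = x 0)
    (he : ∀ t < l, ((e t).1 = x t ∧ A13step k (e t).1 (e t).2 = x (t + 1)) ∨
              ((e t).1 = x (t + 1) ∧ A13step k (e t).1 (e t).2 = x t))
    (hinj : ∀ s < l, ∀ t < l, e s = e t → s = t) :
    ∀ (n t : ℕ) (q : ZMod 6 × ℤ) (vis : List ((ZMod 6 × ℤ) × Fin 2)), t + n = l →
      |q.2| ≤ t → x t = proj k (x 0).2 q →
      (∀ v ∈ vis, ∃ s < t, e s = (proj k (x 0).2 v.1, v.2)) →
      ¬ NoReturn (x 0).1 n q vis := by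
  intro n
  induction n with
  | zero =>
    intro t q vis ht hq hxt _ hno
    obtain rfl : t = l := by omega
    rw [hx] at hxt
    refine hno (Prod.ext (congrArg Prod.fst hxt).symm ?_)
    have h2 : ((q.2 : ℤ) : ZMod k) = 0 := by
      have := congrArg Prod.snd hxt
      simpa [proj] using this
    rw [ZMod.intCast_zmod_eq_zero_iff_dvd] at h2
    exact Int.eq_zero_of_abs_lt_dvd h2 (by omega)
  | succ n ih =>
    intro t q vis ht hq hxt hvis hno
    have htl : t < l := by omega
    have fresh : ∀ v : (ZMod 6 × ℤ) × Fin 2, e t = (proj k (x 0).2 v.1, v.2) → v ∉ vis := by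
      intro v hv hmem
      obtain ⟨s, hs, hes⟩ := hvis v hmem
      exact hs.ne (hinj s (by omega) t htl (hes.trans hv.symm))
    have vis' : ∀ v : (ZMod 6 × ℤ) × Fin 2, e t = (proj k (x 0).2 v.1, v.2) →
        ∀ w ∈ v :: vis, ∃ s < t + 1, e s = (proj k (x 0).2 w.1, w.2) := by
      intro v hv w hw
      rcases List.mem_cons.1 hw with rfl | hw
      · exact ⟨t, by omega, hv⟩
      · obtain ⟨s, hs, hes⟩ := hvis w hw
        exact ⟨s, by omega, hes⟩
    rcases he t htl with ⟨h1, h2⟩ | ⟨h1, h2⟩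
    · have hv : e t = (proj k (x 0).2 q, (e t).2) := Prod.ext (h1.trans hxt) rfl
      refine ih (t + 1) (liftStep q (e t).2) _ (by omega) ?_ ?_ (vis' (q, (e t).2) hv)
        (hno.1 (e t).2 (fresh (q, (e t).2) hv))
      · have := abs_liftStep_le q (e t).2
        push_cast
        omega
      · rw [← h2, h1, hxt, proj_liftStep]
    · obtain ⟨h3, h4⟩ := exists_lift_of_step_eq k (x 0).2 q (e t).1 (e t).2 (h2.trans hxt)
      have hv := Prod.ext (y := (proj k (x 0).2 ((e t).1.1, q.2 - ((e t).2.val : ℤ)), (e t).2))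
        h4 rfl
      refine ih (t + 1) _ _ (by omega) ?_ (h1.symm.trans h4) (vis' (_, (e t).2) hv)
        (hno.2 (e t).2 (e t).1.1 h3 (fresh (_, (e t).2) hv))
      have := (e t).2.isLt
      push_cast
      rw [abs_le] at hq ⊢
      omega

/-- For `k ≥ 5`, the underlying undirected multigraph of `A_k` has no simple cycle
of length `≤ 4`. -/
theorem stmt13 (k : ℕ) (hk : 5 ≤ k) :
    ∀ l, 1 ≤ l → l ≤ 4 → ¬ MultigraphSimpleCycle (A13step k) l := by
  rintro l hl1 hl4 ⟨x, e, hx, he, hinj⟩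
  refine NoReturn.false_of_walk hk hl4 hx he hinj l 0 ((x 0).1, 0) [] (by omega) (by simp)
    (by simp [proj]) (by simp) ?_
  have := noReturn_of_le_four ⟨l - 1, by omega⟩ (x 0).1
  rwa [show l - 1 + 1 = l by omega] at this
end

section
/- Let n ≥ 0. Consider the complete DFA A_n over the alphabet ZMod 5 with state set Q_n = (ZMod 5 × {0,…,n}) ∪ {p_0, ⊤, ⊥}, start state p_0, accepting set {⊤}, and transitions: δ(p_0, a) = (a, 0) for all a; δ((a,j), b) = (a+b, j+1) for j < n and all a,b; δ((a,n), a) = ⊤ and δ((a,n), b) = ⊥ for b ≠ a; δ(⊤, b) = ⊥ and δ(⊥, b) = ⊥ for all b. Then: (a) A_n accepts exactly the finite language L_n = {a_0 a_1 ⋯ a_{n+1} : a_i ∈ ZMod 5 and a_0 + a_1 + ⋯ + a_n = a_{n+1}}; (b) every state of A_n is reachable from p_0; (c) any two distinct states of A_n are distinguishable. Consequently the minimal DFA of L_n has exactly 5(n+1) + 3 states. -/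
/-!
The proof computes the language accepted from each state of `A_n`. From `⊥` nothing is accepted,
from `⊤` only the empty word, from `(a, j)` the words `u c` with `j + |u| = n` and `a + ∑ u = c`
(`accept_mid`, by induction on the word), and from `p₀` the words `u c` with `|u| = n + 1` and
`∑ u = c` (`accept_pzero`), which is the claim about `L_n`.

Accepted words have length `0` from `⊤`, `n - j + 1` from `(a, j)` and `n + 2` from `p₀`. These
lengths separate all states except `(a, j)` and `(a', j)`, and the word `0^(n-j) a` is accepted from
`(a, j)` but not from `(a', j)` with `a' ≠ a`. Hence each state other than `⊥` accepts some word
that no other state accepts (`exists_own_word`), and distinguishability follows.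
-/

/-- The state set of the DFA `A_n`: states `(a, j)` with `a ∈ ZMod 5`,
`0 ≤ j ≤ n` (as `Sum.inl (a, j)`), plus the three states `p₀ = Sum.inr 0`,
`⊤ = Sum.inr 1`, `⊥ = Sum.inr 2`. -/
def Q16 (n : ℕ) : Type := (ZMod 5 × Fin (n + 1)) ⊕ Fin 3

/-- The DFA `A_n` over the alphabet `ZMod 5`: `δ(p₀, a) = (a, 0)`;
`δ((a,j), b) = (a+b, j+1)` for `j < n`; `δ((a,n), a) = ⊤` and `δ((a,n), b) = ⊥`
for `b ≠ a`; `δ(⊤, b) = δ(⊥, b) = ⊥`; start state `p₀`, accepting set `{⊤}`. -/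
def A16 (n : ℕ) : DFA (ZMod 5) (Q16 n) where
  step := fun q b =>
    match q with
    | Sum.inl (a, j) =>
        if h : (j : ℕ) < n then Sum.inl (a + b, ⟨(j : ℕ) + 1, by omega⟩)
        else if b = a then Sum.inr 1 else Sum.inr 2
    | Sum.inr i => if i = 0 then Sum.inl (b, ⟨0, Nat.succ_pos n⟩) else Sum.inr 2
  start := Sum.inr 0
  accept := {q | q = Sum.inr 1}

namespace A16

/-- The state `(a, j)`. -/
def mid {n : ℕ} (a : ZMod 5) (j : ℕ) (h : j < n + 1) : Q16 n := Sum.inl (a, ⟨j, h⟩)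

/-- The state `p₀`. -/
def pzero (n : ℕ) : Q16 n := Sum.inr 0

/-- The state `⊤`. -/
def top (n : ℕ) : Q16 n := Sum.inr 1

/-- The state `⊥`. -/
def bot (n : ℕ) : Q16 n := Sum.inr 2

variable {n : ℕ}

theorem state_cases (q : Q16 n) :
    (∃ a j h, q = mid a j h) ∨ q = pzero n ∨ q = top n ∨ q = bot n := by
  rcases q with ⟨a, j, h⟩ | i
  · exact Or.inl ⟨a, j, h, rfl⟩
  · fin_cases i
    · exact Or.inr (Or.inl rfl)
    · exact Or.inr (Or.inr (Or.inl rfl))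
    · exact Or.inr (Or.inr (Or.inr rfl))

theorem step_mid_lt (a b : ZMod 5) (j : ℕ) (h : j < n) :
    (A16 n).step (mid a j (by omega)) b = mid (a + b) (j + 1) (by omega) := by
  simp [A16, mid, h]
  rfl

theorem step_mid_eq (a b : ZMod 5) :
    (A16 n).step (mid a n (by omega)) b = if b = a then top n else bot n := by
  simp [A16, mid, top, bot]

theorem step_pzero (b : ZMod 5) : (A16 n).step (pzero n) b = mid b 0 (by omega) := rfl

theorem step_top (b : ZMod 5) : (A16 n).step (top n) b = bot n := rfl

theorem step_bot (b : ZMod 5) : (A16 n).step (bot n) b = bot n := rfl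

theorem mid_not_accept (a : ZMod 5) (j : ℕ) (h : j < n + 1) : mid a j h ∉ (A16 n).accept :=
  fun h => Sum.inl_ne_inr h

theorem pzero_not_accept : pzero n ∉ (A16 n).accept :=
  fun h => absurd (Sum.inr_injective h) (by decide)

theorem top_accept : top n ∈ (A16 n).accept := rfl

theorem bot_not_accept : bot n ∉ (A16 n).accept :=
  fun h => absurd (Sum.inr_injective h) (by decide)

theorem accept_bot (w : List (ZMod 5)) : (A16 n).evalFrom (bot n) w ∉ (A16 n).accept := by
  induction w with
  | nil => exact bot_not_accept
  | cons b w ih => rwa [DFA.evalFrom_cons, step_bot]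

theorem accept_top (w : List (ZMod 5)) :
    (A16 n).evalFrom (top n) w ∈ (A16 n).accept ↔ w = [] := by
  cases w with
  | nil => simp [top_accept]
  | cons b w => simp [DFA.evalFrom_cons, step_top, accept_bot]

theorem accept_mid (w : List (ZMod 5)) (a : ZMod 5) (j : ℕ) (h : j < n + 1) :
    (A16 n).evalFrom (mid a j h) w ∈ (A16 n).accept ↔
      ∃ u c, w = u ++ [c] ∧ j + u.length = n ∧ a + u.sum = c := by
  induction w generalizing a j with
  | nil => simp [mid_not_accept]
  | cons b w ih =>
    rw [DFA.evalFrom_cons]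
    by_cases hj : j < n
    · rw [step_mid_lt a b j hj, ih]
      constructor
      · rintro ⟨u, c, rfl, hl, hs⟩
        exact ⟨b :: u, c, rfl, by simp; omega, by simp [← hs, add_assoc]⟩
      · rintro ⟨_ | ⟨d, u⟩, c, hw, hl, hs⟩
        · simp at hl; omega
        · simp only [List.cons_append, List.cons.injEq] at hw
          obtain ⟨rfl, rfl⟩ := hw
          refine ⟨u, c, rfl, ?_, ?_⟩
          · simp at hl; omega
          · simpa [add_assoc] using hs
    · obtain rfl : j = n := by omega
      rw [step_mid_eq]
      have key : (∃ u c, b :: w = u ++ [c] ∧ j + u.length = j ∧ a + u.sum = c) ↔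
          b = a ∧ w = [] := by
        constructor
        · rintro ⟨u, c, hw, hl, hs⟩
          obtain rfl : u = [] := by simpa using hl
          simp at hw hs
          exact ⟨hw.1.trans hs.symm, hw.2⟩
        · rintro ⟨rfl, rfl⟩
          exact ⟨[], b, by simp⟩
      rw [key]
      split_ifs with hb
      · simp [accept_top, hb]
      · simp [accept_bot, hb]

theorem accept_pzero (w : List (ZMod 5)) :
    (A16 n).evalFrom (pzero n) w ∈ (A16 n).accept ↔
      ∃ u c, w = u ++ [c] ∧ u.length = n + 1 ∧ u.sum = c := by
  cases w with
  | nil => simp [pzero_not_accept]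
  | cons b w =>
    rw [DFA.evalFrom_cons, step_pzero, accept_mid]
    constructor
    · rintro ⟨u, c, rfl, hl, hs⟩
      exact ⟨b :: u, c, rfl, by simp; omega, by simpa using hs⟩
    · rintro ⟨_ | ⟨d, u⟩, c, hw, hl, hs⟩
      · simp at hl
      · simp only [List.cons_append, List.cons.injEq] at hw
        obtain ⟨rfl, rfl⟩ := hw
        exact ⟨u, c, rfl, by simp at hl; omega, by simpa using hs⟩

theorem reach_mid (a : ZMod 5) (j : ℕ) (h : j < n + 1) :
    ∃ w, (A16 n).evalFrom (pzero n) w = mid a j h := by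
  induction j with
  | zero => exact ⟨[a], by simp [step_pzero]⟩
  | succ j ih =>
    obtain ⟨w, hw⟩ := ih (by omega)
    refine ⟨w ++ [0], ?_⟩
    rw [DFA.evalFrom_append_singleton, hw, step_mid_lt a 0 j (by omega)]
    simp

theorem reach (q : Q16 n) : ∃ w, (A16 n).evalFrom (pzero n) w = q := by
  obtain ⟨w, hw⟩ := reach_mid (n := n) 0 n (by omega)
  rcases state_cases q with ⟨a, j, h, rfl⟩ | rfl | rfl | rfl
  · exact reach_mid a j h
  · exact ⟨[], rfl⟩
  · exact ⟨w ++ [0], by simp [DFA.evalFrom_append_singleton, hw, step_mid_eq]⟩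
  · exact ⟨w ++ [1], by
      rw [DFA.evalFrom_append_singleton, hw, step_mid_eq, if_neg (by decide)]⟩

/-- Every state other than `⊥` accepts a word that is accepted from no other state. -/
theorem exists_own_word (q : Q16 n) (hq : q ≠ bot n) :
    ∃ w, (A16 n).evalFrom q w ∈ (A16 n).accept ∧
      ∀ q', (A16 n).evalFrom q' w ∈ (A16 n).accept → q' = q := by
  rcases state_cases q with ⟨a, j, h, rfl⟩ | rfl | rfl | rfl
  · refine ⟨List.replicate (n - j) 0 ++ [a], ?_, fun q' h' => ?_⟩
    · rw [accept_mid]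
      exact ⟨_, _, rfl, by simp; omega, by simp⟩
    · rcases state_cases q' with ⟨a', j', hj', rfl⟩ | rfl | rfl | rfl
      · obtain ⟨u, c, hw, hl, hs⟩ := (accept_mid _ _ _ _).1 h'
        obtain ⟨rfl, hc⟩ := List.append_inj' hw rfl
        obtain rfl : j' = j := by simp at hl; omega
        obtain rfl : a' = a := by simp at hs hc; exact hs.trans hc.symm
        rfl
      · obtain ⟨u, c, hw, hl, -⟩ := (accept_pzero _).1 h'
        have := congrArg List.length hw
        simp at this
        omega
      · exact absurd ((accept_top _).1 h') (by simp)
      · exact absurd h' (accept_bot _)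
  · refine ⟨List.replicate (n + 1) 0 ++ [0], ?_, fun q' h' => ?_⟩
    · rw [accept_pzero]
      exact ⟨_, _, rfl, by simp, by simp⟩
    · rcases state_cases q' with ⟨a', j', hj', rfl⟩ | rfl | rfl | rfl
      · obtain ⟨u, c, hw, hl, -⟩ := (accept_mid _ _ _ _).1 h'
        have := congrArg List.length hw
        simp at this
        omega
      · rfl
      · exact absurd ((accept_top _).1 h') (by simp)
      · exact absurd h' (accept_bot _)
  · refine ⟨[], top_accept, fun q' h' => h'⟩
  · exact absurd rfl hq

end A16

/-- (a) `A_n` accepts exactly the finite language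
`L_n = {a₀ ⋯ a_{n+1} : a₀ + ⋯ + a_n = a_{n+1}}`; (b) every state is reachable
from `p₀`; (c) distinct states are distinguishable. Consequently the minimal DFA
of `L_n` has exactly `5(n+1) + 3` states. -/
theorem stmt16 (n : ℕ) :
    ((A16 n).accepts = {w : List (ZMod 5) | ∃ (u : List (ZMod 5)) (c : ZMod 5),
      w = u ++ [c] ∧ u.length = n + 1 ∧ u.sum = c}) ∧
    (∀ q : Q16 n, ∃ w : List (ZMod 5), (A16 n).evalFrom (A16 n).start w = q) ∧
    (∀ q q' : Q16 n, q ≠ q' → ∃ w : List (ZMod 5),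
      Xor' ((A16 n).evalFrom q w ∈ (A16 n).accept)
           ((A16 n).evalFrom q' w ∈ (A16 n).accept)) ∧
    Nat.card (Q16 n) = 5 * (n + 1) + 3 := by
  refine ⟨?_, A16.reach, fun q q' hne => ?_, ?_⟩
  · ext w
    exact A16.accept_pzero w
  · by_cases hq : q = A16.bot n
    · obtain ⟨w, hw, huniq⟩ := A16.exists_own_word q' (fun h => hne (hq.trans h.symm))
      exact ⟨w, Or.inr ⟨hw, fun h => hne (huniq q h)⟩⟩
    · obtain ⟨w, hw, huniq⟩ := A16.exists_own_word q hq
      exact ⟨w, Or.inl ⟨hw, fun h => hne (huniq q' h).symm⟩⟩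
  · change Nat.card ((ZMod 5 × Fin (n + 1)) ⊕ Fin 3) = _
    simp
end
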